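/- Let G be a finite soluble group and let V be a non-central complemented chief factor of G. Then Σ_{k=0}^{∞} P*_{G,V}(k) ≤ min{ (δ_V + q_V/(q_V − 1))·q_V^{n_V} , (⌈δ_V/n_V⌉ + q_V^{n_V}/(q_V^{n_V} − 1))·|H_V| }. -/

import Mathlib

/-!
Definitions supporting the formalization of
"An upper bound on the Chebotarev invariant of a finite group" (Lucchini–Tracey).
-/

open scoped BigOperators

namespace ChebotarevPaper

/-- A `k`-tuple of elements of `G` invariably generates `G` if, replacing each entry by an
arbitrary conjugate, the resulting elements always generate `G`. -/
def InvGen (G : Type*) [Group G] {k : ℕ} (f : Fin k → G) : Prop :=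
  ∀ c : Fin k → G, Subgroup.closure (Set.range fun i => c i * f i * (c i)⁻¹) = ⊤

/-- The probability that `k` independent uniformly random elements of `G` invariably
generate `G`. -/
noncomputable def probInvGen (G : Type*) [Group G] (k : ℕ) : ℝ :=
  Nat.card {f : Fin k → G // InvGen G f} / (Nat.card G : ℝ) ^ k

/-- The Chebotarev invariant `C(G)`:  `C(G) = Σ_{k ≥ 0} (1 − P_I(G,k))`, where `P_I(G,k)`
is the probability that `k` independent uniformly random elements of `G` invariably
generate `G`. -/
noncomputable def cheb (G : Type*) [Group G] : ℝ :=
  ∑' k : ℕ, (1 - probInvGen G k)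

/-- The probability that `k` independent uniformly random elements of `G` generate `G`. -/
noncomputable def probGen (G : Type*) [Group G] (k : ℕ) : ℝ :=
  Nat.card {f : Fin k → G // Subgroup.closure (Set.range f) = ⊤} / (Nat.card G : ℝ) ^ k

/-- The expected number of uniformly random elements of `G` needed to generate `G`. -/
noncomputable def expectedGen (G : Type*) [Group G] : ℝ :=
  ∑' k : ℕ, (1 - probGen G k)

/-- `d(G)`: the minimal number of generators of `G`. -/
noncomputable def minGen (G : Type*) [Group G] : ℕ :=
  sInf {n | ∃ f : Fin n → G, Subgroup.closure (Set.range f) = ⊤}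

/-- `σ` has the defining property of the constant `σ = 2.118456563…` of Pomerance:
for every finite group `X`, the expected number of uniformly random elements needed to
generate `X` is at most `d(X) + σ`. -/
def IsPomeranceConst (σ : ℝ) : Prop :=
  ∀ (X : Type) [Group X] [Finite X], expectedGen X ≤ minGen X + σ

variable (G : Type*) [Group G]

/-- `(X, Y)` is a chief factor of `G`:  both are normal in `G`, `Y < X`, and no normal
subgroup of `G` lies strictly between them (i.e. `X/Y` is a minimal normal subgroup of
`G/Y`). -/
def IsChiefFactorPair (X Y : Subgroup G) : Prop :=
  X.Normal ∧ Y.Normal ∧ Y < X ∧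
    ∀ N : Subgroup G, N.Normal → Y ≤ N → N ≤ X → N = Y ∨ N = X

/-- The chief factor `X/Y` is complemented: there is `U ≤ G` with `UX = G` and
`U ⊓ X = Y`. -/
def IsComplementedFactor (X Y : Subgroup G) : Prop :=
  ∃ U : Subgroup G, U ⊔ X = ⊤ ∧ U ⊓ X = Y

/-- The chief factor `X/Y` is a Frattini chief factor, i.e. `X/Y ≤ Frat(G/Y)`;
equivalently (and this is how we state it), `X/Y` is abelian and has no complement
in `G`. -/
def IsFrattiniFactor (X Y : Subgroup G) : Prop :=
  (∀ a b : G, a ∈ X → b ∈ X → a * b * a⁻¹ * b⁻¹ ∈ Y) ∧ ¬ IsComplementedFactor G X Y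

/-- The chief factor `X/Y` is central in `G`, i.e. `X/Y ≤ Z(G/Y)`. -/
def IsCentralFactor (X Y : Subgroup G) : Prop :=
  ∀ g x : G, x ∈ X → g * x * g⁻¹ * x⁻¹ ∈ Y

/-- The `G`-group `V` (a group with an action `a : G →* MulAut V` of `G` by automorphisms)
is `G`-isomorphic to the chief factor `X/Y` (on which `G` acts by conjugation): there is a
surjective homomorphism `X →* V` with kernel `Y` transforming conjugation by `g ∈ G` into
the action of `g` on `V`. -/
def RepresentsFactor {V : Type*} [Group V] (a : G →* MulAut V) (X Y : Subgroup G) : Prop :=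
  ∃ f : X →* V, Function.Surjective f ∧ (∀ x : X, f x = 1 ↔ (x : G) ∈ Y) ∧
    ∀ (g : G) (x y : X), (y : G) = g * (x : G) * g⁻¹ → f y = a g (f x)

/-- Two `G`-groups `(V₁, a₁)`, `(V₂, a₂)` are `G`-equivalent: there are isomorphisms
`φ : V₁ ≃* V₂` and `Φ : V₁ ⋊ G ≃* V₂ ⋊ G` making the natural diagram of the two
extensions `1 → Vᵢ → Vᵢ ⋊ G → G → 1` commute. -/
def GEquiv {V₁ V₂ : Type*} [Group V₁] [Group V₂]
    (a₁ : G →* MulAut V₁) (a₂ : G →* MulAut V₂) : Prop :=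
  ∃ (φ : V₁ ≃* V₂) (Φ : (V₁ ⋊[a₁] G) ≃* (V₂ ⋊[a₂] G)),
    (∀ v : V₁, Φ (SemidirectProduct.inl v) = SemidirectProduct.inl (φ v)) ∧
    ∀ x, (Φ x).right = x.right

/-- `G`-isomorphism of `G`-groups. -/
def GIso {V₁ V₂ : Type*} [Group V₁] [Group V₂]
    (a₁ : G →* MulAut V₁) (a₂ : G →* MulAut V₂) : Prop :=
  ∃ φ : V₁ ≃* V₂, ∀ (g : G) (v : V₁), φ (a₁ g v) = a₂ g (φ v)

/-- `N` is a minimal normal subgroup of `G`. -/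
def IsMinimalNormal (N : Subgroup G) : Prop :=
  N.Normal ∧ N ≠ ⊥ ∧ ∀ M : Subgroup G, M.Normal → M ≠ ⊥ → M ≤ N → M = N

/-- The socle of `G`: the subgroup generated by all minimal normal subgroups of `G`. -/
def socle : Subgroup G := sSup {N : Subgroup G | IsMinimalNormal G N}

instance socle_normal : (socle G).Normal := by
  constructor
  intro n hn g
  have h : socle G ≤ (socle G).comap (MulAut.conj g).toMonoidHom := by
    rw [socle]
    apply sSup_le
    intro N hN x hx
    have h1 : (MulAut.conj g).toMonoidHom x ∈ N := by
      simpa [MulAut.conj_apply] using hN.1.conj_mem x hx g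
    exact Subgroup.mem_comap.2 (le_sSup hN h1)
  have h2 := h hn
  simpa [MulAut.conj_apply] using h2

/-- The action of `G` (by conjugation, through `f : G →* Q`) on the socle of `Q`. -/
def socAct {Q : Type*} [Group Q] (f : G →* Q) : G →* MulAut (socle Q) :=
  MulAut.conjNormal.comp f

/-- The diagonal action of `G` on `V × V` induced by an action on `V`. -/
def prodAct {V : Type*} [Group V] (a : G →* MulAut V) : G →* MulAut (V × V) where
  toFun g := MulEquiv.prodCongr (a g) (a g)
  map_one' := by
    ext x <;> simp [MulEquiv.prodCongr, MulAut.one_apply]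
  map_mul' g h := by
    ext x <;> simp [MulEquiv.prodCongr, MulAut.mul_apply]

/-- The diagonal action of `H` on `V^u` induced by an action on `V`. -/
def diagAct (H : Type*) [Group H] {V : Type*} [Group V] (b : H →* MulAut V) (u : ℕ) :
    H →* MulAut (Fin u → V) where
  toFun g := MulEquiv.piCongrRight fun _ => b g
  map_one' := by
    ext x i; simp
  map_mul' g h := by
    ext x i; simp [MulAut.mul_apply]

variable {G}

/-- The elements `gs 0, …, gs (k-1)` of `G` satisfy the `V`-property in `G`: they all lie
in the union of the `G`-conjugates of some maximal subgroup `M` of `G` such that the socle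
of `G/core_G(M)` is `G`-equivalent to `V` or to `V × V`. -/
def SatisfyVProperty {V : Type*} [Group V] (a : G →* MulAut V) {k : ℕ}
    (gs : Fin k → G) : Prop :=
  ∃ M : Subgroup G, IsCoatom M ∧
    (GEquiv G (socAct G (QuotientGroup.mk' M.normalCore)) a ∨
      GEquiv G (socAct G (QuotientGroup.mk' M.normalCore)) (prodAct G a)) ∧
    ∀ i, ∃ x : G, x * gs i * x⁻¹ ∈ M

/-- `P*_{G,V}(k)`: the probability that `k` independent uniformly random elements of `G`
satisfy the `V`-property in `G`. -/
noncomputable def pStar {V : Type*} [Group V] (a : G →* MulAut V) (k : ℕ) : ℝ :=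
  Nat.card {gs : Fin k → G // SatisfyVProperty a gs} / (Nat.card G : ℝ) ^ k

/-- The collection of normal subgroups `N` of `G` such that `G/N` is isomorphic to the
monolithic primitive group `L_V` associated to `V` (that is, `V ⋊ (G/C_G(V))` if `V` is
abelian and `G/C_G(V)` otherwise; here `C_G(V)` is the kernel of the action of `G` on
`V`) and the socle of `G/N` is `G`-equivalent to `V`. -/
def crownNormals {V : Type*} [Group V] (a : G →* MulAut V) : Set (Subgroup G) :=
  {N | ∃ _ : N.Normal,
    ((∀ x y : V, x * y = y * x) →
      Nonempty ((G ⧸ N) ≃* (V ⋊[QuotientGroup.kerLift a] (G ⧸ a.ker)))) ∧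
    (¬ (∀ x y : V, x * y = y * x) → Nonempty ((G ⧸ N) ≃* (G ⧸ a.ker))) ∧
    GEquiv G (socAct G (QuotientGroup.mk' N)) a}

/-- `R_G(V)`: the intersection of all normal subgroups `N` of `G` with `G/N ≅ L_V` and
`soc(G/N)` `G`-equivalent to `V`. -/
def crownRadical {V : Type*} [Group V] (a : G →* MulAut V) : Subgroup G :=
  sInf (crownNormals a)

instance crownRadical_normal {V : Type*} [Group V] (a : G →* MulAut V) :
    (crownRadical a).Normal := by
  constructor
  intro n hn g
  rw [crownRadical, Subgroup.mem_sInf] at hn ⊢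
  intro p hp
  obtain ⟨hpN, hrest⟩ := hp
  exact hpN.conj_mem n (hn p ⟨hpN, hrest⟩) g

/-- `I_G(V)`: the preimage in `G` of the socle of `G/R_G(V)`; the `V`-crown of `G` is
`I_G(V)/R_G(V)`. -/
def crownSocle {V : Type*} [Group V] (a : G →* MulAut V) : Subgroup G :=
  (socle (G ⧸ crownRadical a)).comap (QuotientGroup.mk' (crownRadical a))

/-- A chief series of `G`: a chain `⊥ = N_0 < N_1 < … < N_len = ⊤` of normal subgroups
of `G` in which each factor `N_{i+1}/N_i` is a chief factor of `G`. -/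
structure ChiefSeries (G : Type*) [Group G] where
  len : ℕ
  ser : Fin (len + 1) → Subgroup G
  bot_eq : ser 0 = ⊥
  top_eq : ser (Fin.last len) = ⊤
  chief : ∀ i : Fin len, IsChiefFactorPair G (ser i.succ) (ser i.castSucc)

/-- `δ_V(G)` (for a `G`-module `V`): the number of complemented factors in the chief
series `S` of `G` which are `G`-isomorphic to `V`. -/
noncomputable def deltaIso {V : Type*} [Group V] (a : G →* MulAut V)
    (S : ChiefSeries G) : ℕ :=
  Nat.card {i : Fin S.len //
    IsComplementedFactor G (S.ser i.succ) (S.ser i.castSucc) ∧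
    RepresentsFactor G a (S.ser i.succ) (S.ser i.castSucc)}

/-- The chief factor `X/Y` of `G` is `G`-equivalent to the `G`-group `(V, a)`. -/
def FactorGEquiv (X Y : Subgroup G) {V : Type*} [Group V] (a : G →* MulAut V) : Prop :=
  ∃ (W : Type) (_ : Group W) (b : G →* MulAut W),
    RepresentsFactor G b X Y ∧ GEquiv G b a

/-- `δ_V(G)` (for a `G`-group `V`): the number of non-Frattini factors in the chief
series `S` of `G` which are `G`-equivalent to `V`. -/
noncomputable def deltaEquiv {V : Type*} [Group V] (a : G →* MulAut V)
    (S : ChiefSeries G) : ℕ :=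
  Nat.card {i : Fin S.len //
    ¬ IsFrattiniFactor G (S.ser i.succ) (S.ser i.castSucc) ∧
    FactorGEquiv (S.ser i.succ) (S.ser i.castSucc) a}

/-- Bundled `G`-group: a group together with an action of `G` by automorphisms. -/
structure GGroup (G : Type) [Group G] : Type 1 where
  carrier : Type
  [grp : Group carrier]
  act : G →* MulAut carrier

attribute [instance] GGroup.grp

/-- The action `b` of `H` on `V` is irreducible: `V` is nontrivial and has no proper
nontrivial (normal) `H`-invariant subgroup. -/
def IsIrreducibleGGroup (H : Type*) [Group H] {V : Type*} [Group V]
    (b : H →* MulAut V) : Prop :=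
  Nontrivial V ∧
    ∀ W : Subgroup V, W.Normal → (∀ (h : H) (v : V), v ∈ W → b h v ∈ W) → W = ⊥ ∨ W = ⊤

/-- The `H`-equivariant endomorphisms of `V` (for `H`-modules `V` this is
`End_H(V)`). -/
def EquivEnd (H : Type*) [Group H] {V : Type*} [Group V] (b : H →* MulAut V) :=
  {f : V →* V // ∀ (h : H) (v : V), f (b h v) = b h (f v)}

/-- `q_V := |End_H(V)|`. -/
noncomputable def endCard (H : Type*) [Group H] {V : Type*} [Group V]
    (b : H →* MulAut V) : ℕ :=
  Nat.card (EquivEnd H b)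

/-- `n_V := dim_{End_H(V)} V`, characterised by `|End_H(V)| ^ n_V = |V|` (for a finite
irreducible `H`-module `V`, `End_H(V)` is a field and `V` a vector space over it). -/
noncomputable def dimEnd (H : Type*) [Group H] {V : Type*} [Group V]
    (b : H →* MulAut V) : ℕ :=
  sInf {n : ℕ | endCard H b ^ n = Nat.card V}

/-- The set of derivations `ζ : H → V` (satisfying `ζ(h₁h₂) = ζ(h₁)^{h₂} · ζ(h₂)`). -/
def DerSet (H : Type*) [Group H] {V : Type*} [Group V] (b : H →* MulAut V) :
    Set (H → V) :=
  {ζ | ∀ h₁ h₂ : H, ζ (h₁ * h₂) = b h₂ (ζ h₁) * ζ h₂}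

/-- The set of inner derivations `h ↦ [h,v] = v^h · v⁻¹`. -/
def IderSet (H : Type*) [Group H] {V : Type*} [Group V] (b : H →* MulAut V) :
    Set (H → V) :=
  {ζ | ∃ v : V, ∀ h : H, ζ h = b h v * v⁻¹}

/-- `m := dim_{End_H(V)} H¹(H,V)` where `H¹(H,V) = Der(H,V)/Ider(H,V)`, characterised by
`|End_H(V)| ^ m · |Ider(H,V)| = |Der(H,V)|`. -/
noncomputable def h1Dim (H : Type*) [Group H] {V : Type*} [Group V]
    (b : H →* MulAut V) : ℕ :=
  sInf {m : ℕ | endCard H b ^ m * Nat.card (IderSet H b) = Nat.card (DerSet H b)}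

/-- The probability that a uniformly random element of `H` fixes a nonzero (i.e.
non-identity) vector of `V`. -/
noncomputable def fixProb (H : Type*) [Group H] {V : Type*} [Group V]
    (b : H →* MulAut V) : ℝ :=
  Nat.card {h : H // ∃ v : V, v ≠ 1 ∧ b h v = v} / (Nat.card H : ℝ)

/-- `A` is a set of representatives for the irreducible `G`-modules which are
`G`-isomorphic to a chief factor of `G` satisfying `P`:  every member of `A` is an
irreducible abelian `G`-group `G`-isomorphic to some chief factor satisfying `P`, and
every chief factor of `G` satisfying `P` is `G`-isomorphic to exactly one member
of `A`. -/
def IsModuleRepSet {G : Type} [Group G] (P : Subgroup G → Subgroup G → Prop)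
    (A : Finset (GGroup G)) : Prop :=
  (∀ V ∈ A, (∀ x y : V.carrier, x * y = y * x) ∧ IsIrreducibleGGroup G V.act ∧
      ∃ X Y : Subgroup G, IsChiefFactorPair G X Y ∧ P X Y ∧ RepresentsFactor G V.act X Y) ∧
  ∀ X Y : Subgroup G, IsChiefFactorPair G X Y → P X Y →
    ∃! V : GGroup G, V ∈ A ∧ RepresentsFactor G V.act X Y

/-- `A` is a set of representatives for the irreducible `G`-groups which are
`G`-equivalent to a chief factor of `G` satisfying `P`. -/
def IsGGroupRepSet {G : Type} [Group G] (P : Subgroup G → Subgroup G → Prop)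
    (A : Finset (GGroup G)) : Prop :=
  (∀ V ∈ A, IsIrreducibleGGroup G V.act ∧
      ∃ X Y : Subgroup G, IsChiefFactorPair G X Y ∧ P X Y ∧ FactorGEquiv X Y V.act) ∧
  ∀ X Y : Subgroup G, IsChiefFactorPair G X Y → P X Y →
    ∃! V : GGroup G, V ∈ A ∧ FactorGEquiv X Y V.act

section ProbabilityPart

/-- Partial sums of negative-binomial weights. -/
lemma negbin_sum_le (p s : ℝ) (hp : 0 < p) (hs : 0 ≤ s) (hps : p + s = 1) (K : ℕ) :
    ∀ j : ℕ, ∑ k ∈ Finset.range K, (k.choose j : ℝ) * p ^ j * s ^ (k - j) ≤ 1 / p := by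
  induction K with
  | zero => intro j; simp; positivity
  | succ K ih =>
    intro j
    have hpp : 1 / p = 1 + s * (1 / p) := by
      field_simp; linarith
    rw [Finset.sum_range_succ']
    cases j with
    | zero =>
      have h0 := ih 0
      have : ∑ k ∈ Finset.range K, (((k + 1).choose 0 : ℕ) : ℝ) * p ^ 0 * s ^ (k + 1 - 0)
          = s * ∑ k ∈ Finset.range K, (k.choose 0 : ℝ) * p ^ 0 * s ^ (k - 0) := by
        rw [Finset.mul_sum]
        refine Finset.sum_congr rfl fun k _ => ?_
        simp [pow_succ]; ring
      rw [this]
      have := mul_le_mul_of_nonneg_left h0 hs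
      simp only [Nat.choose_zero_right, Nat.cast_one, pow_zero, mul_one, one_mul,
        Nat.sub_zero] at this ⊢
      linarith
    | succ j =>
      have h0 := ih j
      have h1 := ih (j + 1)
      have : ∑ k ∈ Finset.range K,
            (((k + 1).choose (j + 1) : ℕ) : ℝ) * p ^ (j + 1) * s ^ (k + 1 - (j + 1))
          = p * ∑ k ∈ Finset.range K, (k.choose j : ℝ) * p ^ j * s ^ (k - j)
            + s * ∑ k ∈ Finset.range K, (k.choose (j + 1) : ℝ) * p ^ (j + 1) * s ^ (k - (j + 1)) := by
        rw [Finset.mul_sum, Finset.mul_sum, ← Finset.sum_add_distrib]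
        refine Finset.sum_congr rfl fun k _ => ?_
        rw [Nat.choose_succ_succ]
        push_cast
        rcases Nat.lt_or_ge k (j + 1) with hlt | hge
        · rw [Nat.choose_eq_zero_of_lt hlt]
          simp; ring
        · have h2 : k - j = (k - (j + 1)) + 1 := by omega
          rw [h2, Nat.succ_eq_add_one]; ring
      rw [this]
      have e1 := mul_le_mul_of_nonneg_left h0 hp.le
      have e2 := mul_le_mul_of_nonneg_left h1 hs
      have e3 : p * (1 / p) = 1 := by field_simp
      simp only [Nat.choose_zero_succ, Nat.cast_zero, zero_mul]
      linarith

/-- Partial sums of a truncated geometric sequence. -/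
lemma trunc_geom_le (r x : ℝ) (hr0 : 0 < r) (hr1 : r < 1) (N₀ : ℕ)
    (hx : x * r ^ N₀ ≤ 1) (K : ℕ) :
    ∑ j ∈ Finset.range K, min 1 (x * r ^ j) ≤ N₀ + 1 / (1 - r) := by
  have hr : 0 < 1 - r := by linarith
  have h1 : ∑ j ∈ Finset.range N₀, min 1 (x * r ^ j) ≤ N₀ := by
    calc _ ≤ ∑ j ∈ Finset.range N₀, (1 : ℝ) := Finset.sum_le_sum fun j _ => min_le_left _ _
      _ = N₀ := by simp
  have hg : ∀ m : ℕ, ∑ j ∈ Finset.range m, r ^ j ≤ 1 / (1 - r) := by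
    intro m
    rw [one_div, ← tsum_geometric_of_lt_one hr0.le hr1]
    exact (summable_geometric_of_lt_one hr0.le hr1).sum_le_tsum _ fun i _ => by positivity
  rcases le_total K N₀ with h | h
  · have : (∑ j ∈ Finset.range K, min 1 (x * r ^ j)) ≤ K := by
      calc _ ≤ ∑ j ∈ Finset.range K, (1 : ℝ) := Finset.sum_le_sum fun j _ => min_le_left _ _
        _ = K := by simp
    have h2 : (K : ℝ) ≤ N₀ := by exact_mod_cast h
    have : 0 < 1 / (1 - r) := by positivity
    linarith
  · obtain ⟨m, rfl⟩ := Nat.exists_eq_add_of_le h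
    rw [Finset.sum_range_add]
    have h3 : ∑ i ∈ Finset.range m, min 1 (x * r ^ (N₀ + i)) ≤ ∑ i ∈ Finset.range m, r ^ i := by
      refine Finset.sum_le_sum fun i _ => (min_le_right _ _).trans ?_
      rw [pow_add, ← mul_assoc]
      exact mul_le_of_le_one_left (by positivity) hx
    linarith [hg m]

open Classical in
lemma count_le {Γ T : Type*} [Fintype Γ] [Fintype T] (A : Finset Γ) (B : T → Finset Γ)
    (r : ℝ)
    (hB : ∀ t, ((A ∩ B t).card : ℝ) ≤ r * A.card) (k : ℕ) :
    ((Finset.univ.filter fun gs : Fin k → Γ => ∃ t, ∀ i, gs i ∈ B t).card : ℝ) ≤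
      ∑ j ∈ Finset.range (k + 1), (k.choose j : ℝ) *
        ((A.card : ℝ) ^ j * (Aᶜ.card : ℝ) ^ (k - j) * min 1 (Fintype.card T * r ^ j)) := by
  set E := Finset.univ.filter fun gs : Fin k → Γ => ∃ t, ∀ i, gs i ∈ B t with hE
  have hsum : E.card = ∑ J ∈ (Finset.univ : Finset (Fin k)).powerset,
      (E.filter fun gs => (Finset.univ.filter fun i => gs i ∈ A) = J).card := by
    apply Finset.card_eq_sum_card_fiberwise
    intro gs _
    simp
  have hpiece : ∀ J ∈ (Finset.univ : Finset (Fin k)).powerset,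
      ((E.filter fun gs => (Finset.univ.filter fun i => gs i ∈ A) = J).card : ℝ) ≤
        (A.card : ℝ) ^ J.card * (Aᶜ.card : ℝ) ^ (k - J.card) *
          min 1 (Fintype.card T * r ^ J.card) := by
    intro J _
    have hprod : ∀ x y : ℝ, (∏ i : Fin k, if i ∈ J then x else y) = x ^ J.card * y ^ (k - J.card) := by
      intro x y
      rw [Finset.prod_ite, Finset.prod_const, Finset.prod_const]
      congr 2
      · congr 1; ext; simp
      · have : (Finset.univ.filter fun i => i ∉ J) = Jᶜ := by ext; simp
        rw [this, Finset.card_compl, Fintype.card_fin]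
    rw [mul_min_of_nonneg _ _ (by positivity), mul_one]
    apply le_min
    · rw [← hprod]
      have : (E.filter fun gs => (Finset.univ.filter fun i => gs i ∈ A) = J) ⊆
          Fintype.piFinset (fun i => if i ∈ J then A else Aᶜ) := by
        intro gs hgs
        rw [Finset.mem_filter] at hgs
        rw [Fintype.mem_piFinset]
        intro i
        have h2 := hgs.2
        by_cases hi : i ∈ J
        · simp only [hi, if_true]
          rw [← h2] at hi; simpa using hi
        · simp only [hi, if_false]
          rw [← h2] at hi; simpa using hi
      have h3 := Finset.card_le_card this
      rw [Fintype.card_piFinset] at h3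
      have h4 : ((∏ i : Fin k, (if i ∈ J then A else Aᶜ).card : ℕ) : ℝ) =
          ∏ i : Fin k, if i ∈ J then (A.card : ℝ) else (Aᶜ.card : ℝ) := by
        rw [Nat.cast_prod]
        refine Finset.prod_congr rfl fun i _ => ?_
        split_ifs <;> rfl
      rw [← h4]
      exact_mod_cast h3
    · have : (E.filter fun gs => (Finset.univ.filter fun i => gs i ∈ A) = J) ⊆
          Finset.univ.biUnion fun t : T =>
            Fintype.piFinset (fun i => if i ∈ J then A ∩ B t else Aᶜ) := by
        intro gs hgs
        rw [Finset.mem_filter, hE, Finset.mem_filter] at hgs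
        obtain ⟨⟨_, t, ht⟩, h2⟩ := hgs
        rw [Finset.mem_biUnion]
        refine ⟨t, Finset.mem_univ _, ?_⟩
        rw [Fintype.mem_piFinset]
        intro i
        by_cases hi : i ∈ J
        · simp only [hi, if_true]
          rw [← h2] at hi
          exact Finset.mem_inter.2 ⟨by simpa using hi, ht i⟩
        · simp only [hi, if_false]
          rw [← h2] at hi; simpa using hi
      have h3 := (Finset.card_le_card this).trans Finset.card_biUnion_le
      have h5 : ∀ t : T, ((Fintype.piFinset (fun i => if i ∈ J then A ∩ B t else Aᶜ)).card : ℝ) ≤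
          (r * A.card) ^ J.card * (Aᶜ.card : ℝ) ^ (k - J.card) := by
        intro t
        rw [Fintype.card_piFinset, ← hprod, Nat.cast_prod]
        refine Finset.prod_le_prod (fun i _ => by positivity) fun i _ => ?_
        split_ifs
        · exact hB t
        · exact le_rfl
      calc _ ≤ ((∑ t : T, (Fintype.piFinset (fun i => if i ∈ J then A ∩ B t else Aᶜ)).card : ℕ) : ℝ) := by
            exact_mod_cast h3
        _ = ∑ t : T, ((Fintype.piFinset (fun i => if i ∈ J then A ∩ B t else Aᶜ)).card : ℝ) := by
            push_cast; rfl
        _ ≤ ∑ t : T, (r * A.card) ^ J.card * (Aᶜ.card : ℝ) ^ (k - J.card) :=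
            Finset.sum_le_sum fun t _ => h5 t
        _ = _ := by
            rw [Finset.sum_const, Finset.card_univ, nsmul_eq_mul, mul_pow]; ring
  rw [hsum]
  push_cast
  refine (Finset.sum_le_sum hpiece).trans ?_
  rw [Finset.sum_powerset_apply_card (fun j => (A.card : ℝ) ^ j * (Aᶜ.card : ℝ) ^ (k - j) *
          min 1 (Fintype.card T * r ^ j))]
  simp

open Classical in
/-- The abstract probabilistic estimate. -/
lemma tsum_prob_le {Γ T : Type*} [Finite Γ] [Finite T] (A : Set Γ) (B : T → Set Γ)
    (r P : ℝ) (hr0 : 0 < r) (hr1 : r < 1) (hP : 0 < P) (hΓ : 0 < Nat.card Γ)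
    (hA : (Nat.card Γ : ℝ) ≤ P * Nat.card A)
    (hB : ∀ t, (Nat.card (A ∩ B t : Set Γ) : ℝ) ≤ r * Nat.card A)
    (N₀ : ℕ) (hT : (Nat.card T : ℝ) * r ^ N₀ ≤ 1)
    (u : ℕ → ℝ) (hu0 : ∀ k, 0 ≤ u k)
    (hu : ∀ k, u k ≤ (Nat.card {gs : Fin k → Γ // ∃ t, ∀ i, gs i ∈ B t} : ℝ) /
      (Nat.card Γ : ℝ) ^ k) :
    ∑' k, u k ≤ (N₀ + 1 / (1 - r)) * P := by
  have := Fintype.ofFinite Γ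
  have := Fintype.ofFinite T
  set n : ℝ := (Nat.card Γ : ℝ) with hn
  have hn0 : 0 < n := by rw [hn]; exact_mod_cast hΓ
  set A' : Finset Γ := A.toFinset with hA'
  have hAc : (Nat.card A) = A'.card := by
    rw [Nat.card_eq_fintype_card, Set.toFinset_card]
  have hB' : ∀ t, ((A' ∩ (B t).toFinset).card : ℝ) ≤ r * A'.card := by
    intro t
    have h := hB t
    rw [hAc] at h
    rw [hA', ← Set.toFinset_inter, Set.toFinset_card, ← Nat.card_eq_fintype_card]
    exact h
  set p : ℝ := A'.card / n with hp
  set s : ℝ := (A'ᶜ).card / n with hs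
  have hApos : (0 : ℝ) < A'.card := by
    rw [hAc] at hA
    by_contra hcon
    have : (A'.card : ℝ) = 0 := le_antisymm (not_lt.1 hcon) (by positivity)
    rw [this, mul_zero] at hA
    linarith
  have hp0 : 0 < p := by positivity
  have hs0 : 0 ≤ s := by positivity
  have hps : p + s = 1 := by
    rw [hp, hs, ← add_div, div_eq_one_iff_eq hn0.ne', hn, Nat.card_eq_fintype_card]
    exact_mod_cast Finset.card_add_card_compl A'
  have hpP : 1 / p ≤ P := by
    rw [hp, one_div, inv_div, div_le_iff₀ hApos, ← hAc]; exact hA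
  set f : ℕ → ℝ := fun j => min 1 ((Nat.card T : ℝ) * r ^ j) with hf
  have hf0 : ∀ j, 0 ≤ f j := fun j => le_min zero_le_one (by positivity)
  have huk : ∀ k, u k ≤ ∑ j ∈ Finset.range (k + 1), (k.choose j : ℝ) * p ^ j * s ^ (k - j) * f j := by
    intro k
    refine (hu k).trans ?_
    have h := count_le A' (fun t => (B t).toFinset) r hB' k
    have hc : (Nat.card {gs : Fin k → Γ // ∃ t, ∀ i, gs i ∈ B t}) =
        (Finset.univ.filter fun gs : Fin k → Γ => ∃ t, ∀ i, gs i ∈ (B t).toFinset).card := by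
      rw [Nat.card_eq_fintype_card, Fintype.card_subtype]
      simp
    rw [hc, div_le_iff₀ (by positivity)]
    refine h.trans (le_of_eq ?_)
    rw [Finset.sum_mul]
    refine Finset.sum_congr rfl fun j hj => ?_
    have hjk : j ≤ k := by simpa [Nat.lt_succ_iff] using hj
    have : n ^ k = n ^ j * n ^ (k - j) := by rw [← pow_add]; congr 1; omega
    rw [this, hp, hs, div_pow, div_pow, hf, Nat.card_eq_fintype_card]
    field_simp
  apply Real.tsum_le_of_sum_range_le hu0
  intro K
  calc ∑ k ∈ Finset.range K, u k
      ≤ ∑ k ∈ Finset.range K, ∑ j ∈ Finset.range K, (k.choose j : ℝ) * p ^ j * s ^ (k - j) * f j := by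
        refine Finset.sum_le_sum fun k hk => (huk k).trans ?_
        refine Finset.sum_le_sum_of_subset_of_nonneg ?_ ?_
        · have := Finset.mem_range.1 hk
          intro x hx
          simp at hx ⊢; omega
        · intro i _ _
          have := hf0 i
          positivity
    _ = ∑ j ∈ Finset.range K, (∑ k ∈ Finset.range K, (k.choose j : ℝ) * p ^ j * s ^ (k - j)) * f j := by
        rw [Finset.sum_comm]
        simp_rw [Finset.sum_mul]
    _ ≤ ∑ j ∈ Finset.range K, P * f j := by
        refine Finset.sum_le_sum fun j _ => ?_
        exact mul_le_mul_of_nonneg_right ((negbin_sum_le p s hp0 hs0 hps K j).trans hpP) (hf0 j)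
    _ = (∑ j ∈ Finset.range K, f j) * P := by rw [← Finset.mul_sum, mul_comm]
    _ ≤ _ := mul_le_mul_of_nonneg_right (trunc_geom_le r _ hr0 hr1 N₀ hT K) hP.le

end ProbabilityPart

section Derivations

variable {Γ : Type*} [Group Γ] {V : Type*} [CommGroup V] (a : Γ →* MulAut V)

/-- Left derivations `Γ → V`. -/
def Z1 : Subgroup (Γ → V) where
  carrier := {d | ∀ g h, d (g * h) = d g * a g (d h)}
  mul_mem' := by
    intro d e hd he g h
    simp only [Pi.mul_apply, map_mul]
    rw [hd g h, he g h]
    exact mul_mul_mul_comm _ _ _ _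
  one_mem' := by intro g h; simp
  inv_mem' := by
    intro d hd g h
    simp only [Pi.inv_apply, map_inv]
    rw [hd g h, mul_inv]

/-- Derivations trivial on `N`. -/
def ZN (N : Subgroup Γ) : Subgroup (Γ → V) where
  carrier := {d | d ∈ Z1 a ∧ ∀ n ∈ N, d n = 1}
  mul_mem' := by
    rintro d e ⟨hd, hd'⟩ ⟨he, he'⟩
    exact ⟨mul_mem hd he, fun n hn => by simp [hd' n hn, he' n hn]⟩
  one_mem' := ⟨one_mem _, fun n _ => rfl⟩
  inv_mem' := by
    rintro d ⟨hd, hd'⟩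
    exact ⟨inv_mem hd, fun n hn => by simp [hd' n hn]⟩

variable {a}

lemma Z1.mul {d : Γ → V} (hd : d ∈ Z1 a) (g h : Γ) : d (g * h) = d g * a g (d h) := hd g h

lemma Z1.one {d : Γ → V} (hd : d ∈ Z1 a) : d 1 = 1 := by
  have := Z1.mul hd 1 1
  simpa using this

lemma Z1.inv {d : Γ → V} (hd : d ∈ Z1 a) (g : Γ) : d g⁻¹ = (a g⁻¹ (d g))⁻¹ := by
  have h := Z1.mul hd g⁻¹ g
  rw [inv_mul_cancel, Z1.one hd] at h
  exact eq_inv_of_mul_eq_one_left h.symm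

/-- Kernel of a derivation. -/
def dker {d : Γ → V} (hd : d ∈ Z1 a) : Subgroup Γ where
  carrier := {g | d g = 1}
  mul_mem' := by
    intro g h (hg : d g = 1) (hh : d h = 1)
    change d (g * h) = 1
    rw [Z1.mul hd, hg, hh]; simp
  one_mem' := Z1.one hd
  inv_mem' := by
    intro g (hg : d g = 1)
    change d g⁻¹ = 1
    rw [Z1.inv hd, hg]; simp

lemma mem_dker {d : Γ → V} (hd : d ∈ Z1 a) (g : Γ) : g ∈ dker hd ↔ d g = 1 := Iff.rfl

/-- On elements acting trivially, derivations are equivariant. -/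
lemma Z1.conj {d : Γ → V} (hd : d ∈ Z1 a) (g c : Γ) (hc : c ∈ a.ker) :
    d (g * c * g⁻¹) = a g (d c) := by
  have hc' : a c = 1 := hc
  rw [Z1.mul hd, Z1.mul hd, Z1.inv hd, map_mul, hc', mul_one, map_inv, ← MulAut.mul_apply,
    ← map_mul, mul_inv_cancel, map_one, MulAut.one_apply]
  rw [mul_comm (d g), mul_assoc, mul_inv_cancel, mul_one]

lemma Z1.mul_ker {d : Γ → V} (hd : d ∈ Z1 a) (c g : Γ) (hc : c ∈ a.ker) :
    d (c * g) = d c * d g := by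
  have hc' : a c = 1 := hc
  rw [Z1.mul hd, hc', MulAut.one_apply]

/-- Restriction of a derivation to a subgroup acting trivially. -/
def dres {d : Γ → V} (hd : d ∈ Z1 a) (N : Subgroup Γ) (hN : N ≤ a.ker) : N →* V where
  toFun n := d n
  map_one' := Z1.one hd
  map_mul' x y := Z1.mul_ker hd x y (hN x.2)

variable (a)
/-- The homomorphism `v ↦ [g,v]`. -/
def comHom (g : Γ) : V →* V where
  toFun v := a g v * v⁻¹
  map_one' := by simp
  map_mul' x y := by
    rw [map_mul, mul_inv]; exact mul_mul_mul_comm _ _ _ _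

/-- Inner derivations. -/
def innHom : V →* Z1 a where
  toFun v := ⟨fun g => a g v * v⁻¹, by
    intro g h
    change a (g * h) v * v⁻¹ = (a g v * v⁻¹) * a g (a h v * v⁻¹)
    rw [map_mul, map_mul, map_inv, MulAut.mul_apply, mul_comm (a g (a h v)) (a g v)⁻¹,
      mul_mul_mul_comm, mul_inv_cancel, one_mul, mul_comm]⟩
  map_one' := by ext g; simp
  map_mul' x y := by
    ext g
    simp only [map_mul, mul_inv, Subgroup.coe_mul, Pi.mul_apply]
    exact mul_mul_mul_comm _ _ _ _

lemma innHom_apply (v : V) (g : Γ) : (innHom a v : Γ → V) g = a g v * v⁻¹ := rfl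
lemma comHom_apply (v : V) (g : Γ) : comHom a g v = a g v * v⁻¹ := rfl

/-- Irreducibility. -/
def Irr : Prop := Nontrivial V ∧
    ∀ W : Subgroup V, (∀ (h : Γ) (v : V), v ∈ W → a h v ∈ W) → W = ⊥ ∨ W = ⊤

/-- No nontrivial fixed vectors. -/
def NoFix : Prop := ∀ v : V, (∀ g, a g v = v) → v = 1

variable {a}

/-- Number of equivariant endomorphisms is at most the number of vectors fixed by `g`. -/
lemma endCard_le_fix [Finite V] (hI : Irr a) (g : Γ) (v : V) (hv : v ≠ 1) (hgv : a g v = v) :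
    endCard Γ a ≤ Nat.card (comHom a g).ker := by
  have hmem : ∀ e : EquivEnd Γ a, e.1 v ∈ (comHom a g).ker := by
    intro e
    rw [MonoidHom.mem_ker, comHom_apply, ← e.2 g v, hgv, mul_inv_cancel]
  refine Nat.card_le_card_of_injective (fun e : EquivEnd Γ a => (⟨e.1 v, hmem e⟩ : (comHom a g).ker)) ?_
  intro e e' h
  have h' : e.1 v = e'.1 v := congrArg Subtype.val h
  rcases hI.2 (e.1.eqLocus e'.1) (by
    intro h w (hw : e.1 w = e'.1 w)
    change e.1 _ = e'.1 _
    rw [e.2, e'.2, hw]) with h1 | h1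
  · exfalso
    have : v ∈ e.1.eqLocus e'.1 := h'
    rw [h1] at this
    exact hv (Subgroup.mem_bot.1 this)
  · apply Subtype.ext
    ext w
    have : w ∈ e.1.eqLocus e'.1 := by rw [h1]; trivial
    exact this

/-- The set of `g` with `d g ∈ [g, V]`. -/
def Bd (a : Γ →* MulAut V) (d : Γ → V) : Set Γ := {g | d g ∈ (comHom a g).range}

open Classical in
lemma Bd_count [Finite Γ] [Finite V] {d : Γ → V} (hd : d ∈ Z1 a)
    (hsurj : ∀ v, ∃ c ∈ a.ker, d c = v) (A : Set Γ) (hA : ∀ g ∈ A, ∀ c ∈ a.ker, g * c ∈ A)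
    (m : ℕ) (hm : ∀ g ∈ A, m ≤ Nat.card (comHom a g).ker) :
    Nat.card (A ∩ Bd a d : Set Γ) * m ≤ Nat.card A := by
  have hC : 0 < Nat.card a.ker := Nat.card_pos
  -- per coset
  have key : ∀ g ∈ A, Nat.card {c : a.ker // g * c ∈ Bd a d} * m ≤ Nat.card a.ker := by
    intro g hg
    let δ := dres hd a.ker le_rfl
    have hδ : Function.Surjective δ := by
      intro v
      obtain ⟨c, hc, hv⟩ := hsurj v
      exact ⟨⟨c, hc⟩, hv⟩
    let D := (comHom a g).range.comap δ
    have hidx : D.index = Nat.card (comHom a g).ker := by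
      rw [Subgroup.index_comap_of_surjective _ hδ]
      have h1 := (comHom a g).range.card_mul_index
      have h2 := (comHom a g).ker.card_mul_index
      rw [Subgroup.index_ker] at h2
      have h3 : 0 < Nat.card (comHom a g).range := Nat.card_pos
      rw [mul_comm] at h2
      exact Nat.eq_of_mul_eq_mul_left h3 (h1.trans h2.symm)
    have hD := D.card_mul_index
    rw [hidx] at hD
    have hle : Nat.card {c : a.ker // g * c ∈ Bd a d} ≤ Nat.card D := by
      by_cases hne : Nonempty {c : a.ker // g * (c : Γ) ∈ Bd a d}
      · obtain ⟨c0, hc0⟩ := hne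
        have hmem : ∀ c : {c : a.ker // g * (c : Γ) ∈ Bd a d}, c0⁻¹ * c.1 ∈ D := by
          rintro ⟨c, hc⟩
          have hcom : ∀ c : a.ker, comHom a (g * (c : Γ)) = comHom a g := by
            intro c
            have : a (c : Γ) = 1 := c.2
            ext v
            rw [comHom_apply, comHom_apply, map_mul, this, mul_one]
          rw [Bd, Set.mem_ofPred_eq, hcom, Z1.mul hd] at hc hc0
          rw [Subgroup.mem_comap, map_mul, map_inv]
          change (d c0)⁻¹ * d c ∈ _
          have h1 := mul_mem (inv_mem hc0) hc
          have h2 : a g ((d c0)⁻¹ * d c) ∈ (comHom a g).range := by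
            convert h1 using 1
            rw [map_mul, map_inv, mul_inv_rev, mul_assoc, inv_mul_cancel_left]
          have h3 : a g ((d c0)⁻¹ * d c) * ((d c0)⁻¹ * d c)⁻¹ ∈ (comHom a g).range :=
            ⟨(d c0)⁻¹ * d c, rfl⟩
          have h4 := mul_mem (inv_mem h3) h2
          convert h4 using 1
          rw [mul_inv_rev, inv_inv, mul_assoc, inv_mul_cancel, mul_one]
        refine Nat.card_le_card_of_injective (fun c => (⟨_, hmem c⟩ : D)) ?_
        intro c c' h
        have := congrArg Subtype.val h
        exact Subtype.ext (mul_left_cancel this)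
      · rw [not_nonempty_iff] at hne
        rw [Nat.card_of_isEmpty]; exact Nat.zero_le _
    calc _ ≤ Nat.card D * Nat.card (comHom a g).ker := Nat.mul_le_mul hle (hm g hg)
      _ = _ := hD
  -- double counting
  have e : (A ∩ Bd a d : Set Γ) × a.ker ≃ Σ g : A, {c : a.ker // (g : Γ) * c ∈ Bd a d} :=
    { toFun := fun x => ⟨⟨x.1 * (x.2 : Γ)⁻¹, hA _ x.1.2.1 _ (inv_mem x.2.2)⟩, x.2, by
          simpa using x.1.2.2⟩
      invFun := fun y => ⟨⟨y.1 * (y.2.1 : Γ), hA _ y.1.2 _ y.2.1.2, y.2.2⟩, y.2.1⟩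
      left_inv := by
        rintro ⟨⟨x, hx⟩, c⟩
        simp
      right_inv := by
        rintro ⟨⟨g, hg⟩, c, hc⟩
        simp only [Sigma.mk.injEq, mul_inv_cancel_right, true_and]
        congr! 1
        simp }
  have hcard := Nat.card_congr e
  have := Fintype.ofFinite A
  rw [Nat.card_prod, Nat.card_sigma] at hcard
  have h1 : (∑ g : A, Nat.card {c : a.ker // (g : Γ) * c ∈ Bd a d}) * m
      ≤ ∑ g : A, Nat.card a.ker := by
    rw [Finset.sum_mul]
    exact Finset.sum_le_sum fun g _ => key g g.2
  rw [← hcard, Finset.sum_const, Finset.card_univ, smul_eq_mul, ← Nat.card_eq_fintype_card] at h1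
  have h2 : Nat.card a.ker * (Nat.card (A ∩ Bd a d : Set Γ) * m) ≤ Nat.card a.ker * Nat.card A := by
    nlinarith
  exact Nat.le_of_mul_le_mul_left h2 hC

end Derivations

section Filtration

open scoped commutatorElement

lemma chief_abelian {Γ : Type*} [Group Γ] (hsol : Group.IsSolvable Γ) {X Y : Subgroup Γ}
    (h : IsChiefFactorPair Γ X Y) : ∀ x ∈ X, ∀ y ∈ X, ⁅x, y⁆ ∈ Y := by
  obtain ⟨hX, hY, hlt, hmin⟩ := h
  rcases hmin (⁅X, X⁆ ⊔ Y) inferInstance le_sup_right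
    (sup_le (Subgroup.commutator_le_left X X) hlt.le) with h1 | h1
  · intro x hx y hy
    rw [← h1]
    exact Subgroup.mem_sup_left (Subgroup.commutator_mem_commutator hx hy)
  · exfalso
    let Q := X ⧸ Y.subgroupOf X
    have hn : Nontrivial Q := by
      rw [QuotientGroup.nontrivial_iff, Ne, Subgroup.subgroupOf_eq_top]
      exact not_le_of_gt hlt
    have hs : Group.IsSolvable Q := by
      have : Group.IsSolvable X := inferInstance
      exact Group.isSolvable_of_surjective (QuotientGroup.mk'_surjective (Y.subgroupOf X))
    have hlt' := Group.IsSolvable.commutator_lt_top_of_nontrivial Q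
    apply hlt'.ne
    have hle : ⁅X, X⁆ ⊔ Y ≤ ((commutator Q).comap (QuotientGroup.mk' (Y.subgroupOf X))).map X.subtype := by
      apply sup_le
      · rw [Subgroup.commutator_le]
        intro x hx y hy
        refine ⟨⁅(⟨x, hx⟩ : X), (⟨y, hy⟩ : X)⁆, ?_, rfl⟩
        rw [SetLike.mem_coe, Subgroup.mem_comap, map_commutatorElement]
        exact Subgroup.commutator_mem_commutator (Subgroup.mem_top _) (Subgroup.mem_top _)
      · intro y hy
        refine ⟨⟨y, hlt.le hy⟩, ?_, rfl⟩
        rw [SetLike.mem_coe, Subgroup.mem_comap]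
        have : (QuotientGroup.mk' (Y.subgroupOf X)) ⟨y, hlt.le hy⟩ = 1 := by
          rw [QuotientGroup.mk'_apply, QuotientGroup.eq_one_iff]
          exact hy
        rw [this]; exact one_mem _
    rw [eq_top_iff]
    intro q _
    obtain ⟨x, rfl⟩ := QuotientGroup.mk'_surjective _ q
    have hx : (x : Γ) ∈ ⁅X, X⁆ ⊔ Y := by rw [h1]; exact x.2
    obtain ⟨z, hz, hzx⟩ := hle hx
    have : z = x := Subtype.ext hzx
    rw [← this]; exact hz

variable {Γ : Type*} [Group Γ] {V : Type*} [CommGroup V] {a : Γ →* MulAut V}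

lemma good_of_nontrivial (hI : Irr a) {X Y : Subgroup Γ} (h : IsChiefFactorPair Γ X Y)
    (hX : X ≤ a.ker) {d : Γ → V} (hd : d ∈ ZN a Y) (hne : ∃ x ∈ X, d x ≠ 1) :
    IsComplementedFactor Γ X Y ∧ RepresentsFactor Γ a X Y := by
  obtain ⟨hXn, hYn, hlt, hmin⟩ := h
  obtain ⟨hd, hdY⟩ := hd
  have hker : dker hd ⊓ X = Y := by
    have hnorm : (dker hd ⊓ X).Normal := by
      constructor
      rintro n ⟨hn1, hn2⟩ g
      have hn1 : d n = 1 := hn1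
      refine ⟨?_, hXn.conj_mem n hn2 g⟩
      change d _ = 1
      rw [Z1.conj hd g n (hX hn2), hn1, map_one]
    rcases hmin _ hnorm (le_inf (fun y hy => hdY y hy) hlt.le) inf_le_right with h1 | h1
    · exact h1
    · exfalso
      obtain ⟨x, hx, hxd⟩ := hne
      rw [← h1] at hx
      exact hxd hx.1
  have hsurj : Function.Surjective (dres hd X hX) := by
    rw [← MonoidHom.range_eq_top]
    rcases hI.2 (dres hd X hX).range (by
      rintro g _ ⟨x, rfl⟩
      refine ⟨⟨g * x * g⁻¹, hXn.conj_mem x x.2 g⟩, ?_⟩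
      exact Z1.conj hd g x (hX x.2)) with h1 | h1
    · exfalso
      obtain ⟨x, hx, hxd⟩ := hne
      have : dres hd X hX ⟨x, hx⟩ ∈ (dres hd X hX).range := ⟨_, rfl⟩
      rw [h1] at this
      exact hxd (Subgroup.mem_bot.1 this)
    · exact h1
  refine ⟨⟨dker hd, ?_, hker⟩, dres hd X hX, hsurj, ?_, ?_⟩
  · rw [eq_top_iff]
    intro g _
    obtain ⟨x, hx⟩ := hsurj (d g)
    have hx : d x = d g := hx
    have : g = x * ((x : Γ)⁻¹ * g) := by group
    rw [this]
    refine mul_mem (Subgroup.mem_sup_right x.2) (Subgroup.mem_sup_left ?_)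
    change d _ = 1
    have hxi : (x : Γ)⁻¹ ∈ a.ker := inv_mem (hX x.2)
    have e : a (x : Γ)⁻¹ = 1 := hxi
    rw [Z1.mul_ker hd _ _ hxi, Z1.inv hd, e, MulAut.one_apply, hx, inv_mul_cancel]
  · intro x
    constructor
    · intro hx
      rw [← hker]; exact ⟨hx, x.2⟩
    · intro hx
      exact hdY x hx
  · intro g x y hy
    change d y = a g (d x)
    rw [hy, Z1.conj hd g x (hX x.2)]

lemma finite_equivEnd [Finite V] : Finite (EquivEnd Γ a) :=
  Finite.of_injective (fun e : EquivEnd Γ a => (e.1 : V → V))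
    fun _ _ h => Subtype.ext (DFunLike.coe_injective h)

open Classical in
lemma card_ZN_step [Finite Γ] [Finite V] (hI : Irr a) {X Y : Subgroup Γ}
    (h : IsChiefFactorPair Γ X Y) (hX : X ≤ a.ker) :
    Nat.card (ZN a Y) ≤ Nat.card (ZN a X) * endCard Γ a ^
      (if IsComplementedFactor Γ X Y ∧ RepresentsFactor Γ a X Y then 1 else 0) := by
  let ρ : ZN a Y →* (X → V) :=
    { toFun := fun d x => (d : Γ → V) x
      map_one' := rfl
      map_mul' := fun _ _ => rfl }
  have hcard := ρ.ker.card_mul_index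
  rw [Subgroup.index_ker] at hcard
  rw [← hcard]
  refine Nat.mul_le_mul ?_ ?_
  · have hmem : ∀ d : ρ.ker, ((d : ZN a Y) : Γ → V) ∈ ZN a X := by
      intro d
      refine ⟨d.1.2.1, fun x hx => ?_⟩
      have := congrFun (show ρ d.1 = 1 from d.2) ⟨x, hx⟩
      exact this
    refine Nat.card_le_card_of_injective (fun d => (⟨_, hmem d⟩ : ZN a X)) ?_
    intro d d' hdd
    have := congrArg Subtype.val hdd
    exact Subtype.ext (Subtype.ext this)
  · split_ifs with hg
    · rw [pow_one]
      obtain ⟨-, f, hf, hfY, hfe⟩ := hg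
      have hex : ∀ y : ρ.range, ∃ e : EquivEnd Γ a, ∀ x, (y : X → V) x = e.1 (f x) := by
        rintro ⟨_, d, rfl⟩
        have hd := d.2.1
        have hle : f.ker ≤ (dres hd X hX).ker := by
          intro x hx
          exact d.2.2 x ((hfY x).1 hx)
        let e := f.liftOfSurjective hf ⟨dres hd X hX, hle⟩
        have he : ∀ x, e (f x) = (d : Γ → V) x := fun x =>
          MonoidHom.liftOfRightInverse_comp_apply f _ _ ⟨dres hd X hX, hle⟩ x
        refine ⟨⟨e, ?_⟩, fun x => (he x).symm⟩
        intro g v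
        obtain ⟨x, rfl⟩ := hf v
        let y : X := ⟨g * x * g⁻¹, h.1.conj_mem x x.2 g⟩
        rw [← hfe g x y rfl, he, he]
        exact Z1.conj hd g x (hX x.2)
      choose E hE using hex
      have : Finite (EquivEnd Γ a) := finite_equivEnd
      refine Nat.card_le_card_of_injective E ?_
      intro y y' hyy
      ext x
      rw [hE, hE, hyy]
    · rw [pow_zero]
      have hbot : ρ.range = ⊥ := by
        rw [eq_bot_iff]
        rintro _ ⟨d, rfl⟩
        rw [Subgroup.mem_bot]
        ext x
        by_contra hne
        exact hg (good_of_nontrivial hI h hX d.2 ⟨x, x.2, hne⟩)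
      rw [hbot]; simp

lemma exists_prime_exp [Finite V] (hI : Irr a) : ∃ p : ℕ, p.Prime ∧ p ∣ Nat.card V ∧ ∀ v : V, v ^ p = 1 := by
  have := hI.1
  obtain ⟨p, hp, hdvd⟩ := Nat.exists_prime_and_dvd (Finite.one_lt_card (α := V)).ne'
  have := Fact.mk hp
  refine ⟨p, hp, hdvd, ?_⟩
  rcases hI.2 (powMonoidHom p : V →* V).ker (by
    intro g v hv
    rw [MonoidHom.mem_ker, powMonoidHom_apply] at hv ⊢
    rw [← map_pow, hv, map_one]) with h1 | h1
  · exfalso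
    obtain ⟨x, hx⟩ := exists_prime_orderOf_dvd_card' p hdvd
    have : x ∈ (powMonoidHom p : V →* V).ker := by
      rw [MonoidHom.mem_ker, powMonoidHom_apply, ← hx, pow_orderOf_eq_one]
    rw [h1, Subgroup.mem_bot] at this
    rw [this, orderOf_one] at hx
    exact hp.one_lt.ne hx
  · intro v
    have : v ∈ (powMonoidHom p : V →* V).ker := by rw [h1]; trivial
    exact this

lemma noFix_normal (hI : Irr a) {X : Subgroup Γ} (hX : X.Normal) (hn : ¬ X ≤ a.ker) (v : V)
    (hv : ∀ x ∈ X, a x v = v) : v = 1 := by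
  let W : Subgroup V :=
    { carrier := {v | ∀ x ∈ X, a x v = v}
      mul_mem' := by
        intro v w hv hw x hx
        rw [map_mul, hv x hx, hw x hx]
      one_mem' := by intro x _; simp
      inv_mem' := by
        intro v hv x hx
        rw [map_inv, hv x hx] }
  rcases hI.2 W (by
    intro g v hv x hx
    have h1 := hv (g⁻¹ * x * g) (by simpa using hX.conj_mem x hx g⁻¹)
    have : x * g = g * (g⁻¹ * x * g) := by group
    rw [← MulAut.mul_apply, ← map_mul, this, map_mul, MulAut.mul_apply, h1]) with h1 | h1
  · have : v ∈ W := hv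
    rw [h1] at this
    exact Subgroup.mem_bot.1 this
  · exfalso
    apply hn
    intro x hx
    rw [MonoidHom.mem_ker]
    ext w
    have : w ∈ W := by rw [h1]; trivial
    exact this x hx

lemma card_ZN_top [Finite Γ] [Finite V] (hsol : Group.IsSolvable Γ) (hI : Irr a) {X Y : Subgroup Γ}
    (h : IsChiefFactorPair Γ X Y) (hY : Y ≤ a.ker) (hX : ¬ X ≤ a.ker) :
    Nat.card (ZN a Y) ≤ Nat.card V := by
  have hab := chief_abelian hsol h
  obtain ⟨hXn, hYn, hlt, hmin⟩ := h
  have hfix := noFix_normal hI hXn hX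
  -- derivations in `ZN a Y` are determined on `X`
  have hdet : ∀ d ∈ ZN a Y, (∀ x ∈ X, d x = 1) → d = 1 := by
    rintro d ⟨hd, hdY⟩ hdX
    ext g
    apply hfix
    intro x hx
    have e1 := Z1.mul hd x g
    have e2 := Z1.mul hd g (g⁻¹ * x * g)
    rw [hdX x hx, one_mul] at e1
    have h3 : g⁻¹ * x * g ∈ X := by simpa using hXn.conj_mem x hx g⁻¹
    rw [hdX _ h3, map_one, mul_one] at e2
    rw [← e1, ← e2]
    congr 1; group
  obtain ⟨p, hp, hpV, hexp⟩ := exists_prime_exp hI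
  have := Fact.mk hp
  let Q := X ⧸ Y.subgroupOf X
  -- coprimality
  have hcop : ¬ p ∣ Nat.card Q := by
    intro hdvd
    obtain ⟨q, hq⟩ := exists_prime_orderOf_dvd_card' p hdvd
    let E : Subgroup Γ :=
      { carrier := {x | x ∈ X ∧ x ^ p ∈ Y}
        mul_mem' := by
          rintro x y ⟨hx, hxp⟩ ⟨hy, hyp⟩
          refine ⟨mul_mem hx hy, ?_⟩
          have hc : Commute (x : Γ ⧸ Y) (y : Γ ⧸ Y) := by
            rw [commute_iff_eq, ← commutatorElement_eq_one_iff_mul_comm]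
            have := hab x hx y hy
            rw [← QuotientGroup.eq_one_iff] at this
            exact this
          rw [← QuotientGroup.eq_one_iff] at hxp hyp ⊢
          rw [QuotientGroup.mk_pow, QuotientGroup.mk_mul, hc.mul_pow, ← QuotientGroup.mk_pow,
            ← QuotientGroup.mk_pow, hxp, hyp, one_mul]
        one_mem' := ⟨one_mem _, by rw [one_pow]; exact one_mem _⟩
        inv_mem' := by
          rintro x ⟨hx, hxp⟩
          exact ⟨inv_mem hx, by rw [inv_pow]; exact inv_mem hxp⟩ }
    have hEn : E.Normal := by
      constructor
      rintro x ⟨hx, hxp⟩ g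
      refine ⟨hXn.conj_mem x hx g, ?_⟩
      rw [conj_pow]
      exact hYn.conj_mem _ hxp g
    have hEX : E = X := by
      rcases hmin E hEn (fun y hy => ⟨hlt.le hy, pow_mem hy p⟩) (fun x hx => hx.1) with h1 | h1
      · exfalso
        obtain ⟨x, rfl⟩ := QuotientGroup.mk'_surjective _ q
        have hpow : (QuotientGroup.mk' (Y.subgroupOf X) x) ^ p = 1 := by
          rw [← hq]; exact pow_orderOf_eq_one _
        rw [← map_pow, QuotientGroup.mk'_apply, QuotientGroup.eq_one_iff] at hpow
        have hxE : (x : Γ) ∈ E := ⟨x.2, hpow⟩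
        rw [h1] at hxE
        have : QuotientGroup.mk' (Y.subgroupOf X) x = 1 := by
          rw [QuotientGroup.mk'_apply, QuotientGroup.eq_one_iff]; exact hxE
        rw [this, orderOf_one] at hq
        exact hp.one_lt.ne hq
      · exact h1
    let P : Subgroup (MulAut V) := X.map a
    have hP : IsPGroup p P := by
      rintro ⟨_, x, hx, rfl⟩
      refine ⟨1, Subtype.ext ?_⟩
      rw [pow_one]
      change (a x) ^ p = 1
      rw [← map_pow]
      have hx : x ∈ X := hx
      rw [← hEX] at hx
      exact hY hx.2
    obtain ⟨b, hb, hb1⟩ := hP.exists_fixed_point_of_prime_dvd_card_of_fixed_point V hpV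
      (a := (1 : V)) (by rintro ⟨s, hs⟩; exact map_one s)
    apply hb1
    symm
    apply hfix
    intro x hx
    exact hb ⟨a x, x, hx, rfl⟩
  have := Fintype.ofFinite Q
  obtain ⟨u, -, hu⟩ := Nat.exists_mul_mod_eq_one_of_coprime
    ((Nat.coprime_comm.1 ((Nat.Prime.coprime_iff_not_dvd hp).2 hcop))) hp.one_lt
  have hpow : ∀ v : V, v ^ (Nat.card Q * u) = v := by
    intro v
    conv_rhs => rw [← pow_one v]
    rw [← Nat.div_add_mod (Nat.card Q * u) p, hu, pow_add, pow_mul, hexp, one_pow, one_mul]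
  -- averaging
  have hinn : ∀ d : ZN a Y, ∃ v : V, ∀ x ∈ X, (d : Γ → V) x = a x v * v⁻¹ := by
    rintro ⟨d, hd, hdY⟩
    let F : Q → V := fun q => d (q.out : X)
    let w := ∏ q : Q, F q
    have hF : ∀ x y : X, (QuotientGroup.mk x : Q) = QuotientGroup.mk y → d x = d y := by
      intro x y hxy
      rw [QuotientGroup.eq] at hxy
      have hxy : (x : Γ)⁻¹ * y ∈ Y := hxy
      have e : (y : Γ) = x * ((x : Γ)⁻¹ * y) := by group
      rw [e, Z1.mul hd, hdY _ hxy, map_one, mul_one]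
    refine ⟨(w ^ u)⁻¹, fun x hx => ?_⟩
    have hw : w = (d x) ^ (Nat.card Q) * a x w := by
      let x' : X := ⟨x, hx⟩
      have e1 : w = ∏ q : Q, F ((x' : Q) * q) :=
        (Equiv.prod_comp (Equiv.mulLeft (x' : Q)) F).symm
      have e2 : ∀ q : Q, F ((x' : Q) * q) = d x * a x (F q) := by
        intro q
        rw [← Z1.mul hd]
        refine hF _ (x' * q.out) ?_
        rw [QuotientGroup.out_eq', QuotientGroup.mk_mul, QuotientGroup.out_eq']
      conv_lhs => rw [e1]
      simp_rw [e2]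
      rw [Finset.prod_mul_distrib, Finset.prod_const, Finset.card_univ, Nat.card_eq_fintype_card,
        ← map_prod]
    have e3 : (d x) ^ (Nat.card Q) = w * (a x w)⁻¹ := eq_mul_inv_of_mul_eq hw.symm
    change d x = _
    rw [← hpow (d x), pow_mul, e3, mul_pow, map_inv, map_pow, inv_inv, mul_comm, inv_pow]
  choose ν hν using hinn
  refine Nat.card_le_card_of_injective ν ?_
  intro d e hde
  have h1 : ((d * e⁻¹ : ZN a Y) : Γ → V) = 1 := by
    apply hdet _ (d * e⁻¹).2
    intro x hx
    change (d : Γ → V) x * ((e : Γ → V) x)⁻¹ = 1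
    rw [hν d x hx, hν e x hx, hde, mul_inv_cancel]
  have h2 : d * e⁻¹ = 1 := Subtype.ext h1
  exact mul_inv_eq_one.1 h2

open Classical in
lemma card_Z1_le [Finite Γ] [Finite V] (hsol : Group.IsSolvable Γ) (hI : Irr a) (hne : a.ker ≠ ⊤)
    (S : ChiefSeries Γ) :
    Nat.card (Z1 a) ≤ Nat.card V * endCard Γ a ^ deltaIso a S := by
  have hq : 0 < endCard Γ a := by
    have : Finite (EquivEnd Γ a) := finite_equivEnd
    have : Nonempty (EquivEnd Γ a) := ⟨⟨MonoidHom.id V, fun _ _ => rfl⟩⟩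
    exact Nat.card_pos
  let good : Fin S.len → Prop := fun i =>
    IsComplementedFactor Γ (S.ser i.succ) (S.ser i.castSucc) ∧
    RepresentsFactor Γ a (S.ser i.succ) (S.ser i.castSucc)
  have hδ : deltaIso a S = (Finset.univ.filter good).card := by
    unfold deltaIso
    rw [Nat.card_eq_fintype_card, Fintype.card_subtype]
  have ind : ∀ i : Fin (S.len + 1), S.ser i ≤ a.ker →
      Nat.card (Z1 a) ≤ Nat.card (ZN a (S.ser i)) * endCard Γ a ^
        (Finset.univ.filter fun j : Fin S.len => good j ∧ j.castSucc < i).card := by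
    intro i
    induction i using Fin.induction with
    | zero =>
      intro _
      have : ZN a (S.ser 0) = Z1 a := by
        ext d
        constructor
        · exact fun h => h.1
        · intro h
          refine ⟨h, fun n hn => ?_⟩
          rw [S.bot_eq, Subgroup.mem_bot] at hn
          rw [hn, Z1.one h]
      rw [this]
      exact Nat.le_mul_of_pos_right _ (pow_pos hq _)
    | succ i ih =>
      intro hi
      have hch := S.chief i
      have h1 := ih (hch.2.2.1.le.trans hi)
      refine h1.trans ((Nat.mul_le_mul_right _ (card_ZN_step hI hch hi)).trans ?_)
      rw [mul_assoc, ← pow_add]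
      refine Nat.mul_le_mul_left _ (Nat.pow_le_pow_right hq ?_)
      by_cases hg : good i
      · rw [if_pos hg, add_comm]
        apply Nat.succ_le_of_lt
        apply Finset.card_lt_card
        rw [Finset.ssubset_iff_of_subset]
        · refine ⟨i, ?_, ?_⟩
          · simp [hg]
          · simp
        · intro j hj
          simp only [Finset.mem_filter, Finset.mem_univ, true_and] at hj ⊢
          exact ⟨hj.1, hj.2.trans (Fin.castSucc_lt_succ)⟩
      · rw [if_neg hg, zero_add]
        apply Finset.card_le_card
        intro j hj
        simp only [Finset.mem_filter, Finset.mem_univ, true_and] at hj ⊢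
        exact ⟨hj.1, hj.2.trans (Fin.castSucc_lt_succ)⟩
  have hlast : ¬ S.ser (Fin.last _) ≤ a.ker := by
    rw [S.top_eq, top_le_iff]; exact hne
  have hex : ∃ i : Fin S.len, S.ser i.castSucc ≤ a.ker ∧ ¬ S.ser i.succ ≤ a.ker := by
    by_contra hcon
    push Not at hcon
    apply hlast
    have : ∀ i : Fin (S.len + 1), S.ser i ≤ a.ker := by
      intro i
      induction i using Fin.induction with
      | zero => rw [S.bot_eq]; exact bot_le
      | succ i ih => exact hcon i ih
    exact this _
  obtain ⟨i, hi1, hi2⟩ := hex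
  refine (ind _ hi1).trans (Nat.mul_le_mul (card_ZN_top hsol hI (S.chief i) hi1 hi2) ?_)
  refine Nat.pow_le_pow_right hq ?_
  rw [hδ]
  apply Finset.card_le_card
  intro j hj
  simp only [Finset.mem_filter, Finset.mem_univ, true_and] at hj ⊢
  exact hj.1

end Filtration

section Maximal

variable {Γ : Type*} [Group Γ] {V : Type*} [CommGroup V] {a : Γ →* MulAut V}

/-- `|End_Γ(V)| ^ dim V = |V|`. -/
lemma endCard_pow_dimEnd [Finite V] (hI : Irr a) : endCard Γ a ^ dimEnd Γ a = Nat.card V := by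
  have hnt := hI.1
  suffices h : ∃ n : ℕ, endCard Γ a ^ n = Nat.card V from Nat.sInf_mem h
  let act : Γ → AddMonoid.End (Additive V) := fun g => MonoidHom.toAdditive (a g).toMonoidHom
  let F : Subring (AddMonoid.End (Additive V)) := Subring.centralizer (Set.range act)
  let toE : (V →* V) → AddMonoid.End (Additive V) := fun f => MonoidHom.toAdditive f
  have hF : ∀ (f : V →* V), toE f ∈ F ↔
      ∀ g v, f (a g v) = a g (f v) := by
    intro f
    refine Subring.mem_centralizer_iff.trans ?_
    constructor
    · intro h g v
      have := h (act g) ⟨g, rfl⟩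
      exact (DFunLike.congr_fun this (Additive.ofMul v)).symm
    · rintro h _ ⟨g, rfl⟩
      exact DFunLike.ext _ _ fun v => (h g v.toMul).symm
  have hcard : endCard Γ a = Nat.card F := by
    refine Nat.card_congr
      { toFun := fun e => ⟨toE e.1, (hF e.1).2 e.2⟩
        invFun := fun x => ⟨MonoidHom.toAdditive.symm x.1, (hF _).1 x.2⟩
        left_inv := fun _ => rfl
        right_inv := fun _ => rfl }
  have hfin : Finite F := by
    have : Finite (AddMonoid.End (Additive V)) :=
      Finite.of_injective (fun e : AddMonoid.End (Additive V) => (e : Additive V → Additive V))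
        DFunLike.coe_injective
    infer_instance
  have hinj : ∀ x : F, x ≠ 0 → ∀ v : V, x.1 (Additive.ofMul v) = 0 → v = 1 := by
    intro x hx v hv
    let f : V →* V := MonoidHom.toAdditive.symm x.1
    have hf := (hF f).1 x.2
    rcases hI.2 f.ker (by
      intro g v hv
      rw [MonoidHom.mem_ker] at hv ⊢
      rw [hf, hv, map_one]) with h1 | h1
    · have : v ∈ f.ker := hv
      rw [h1] at this
      exact Subgroup.mem_bot.1 this
    · exfalso
      apply hx
      apply Subtype.ext
      refine DFunLike.ext _ _ fun w => ?_
      have : w.toMul ∈ f.ker := by rw [h1]; trivial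
      exact this
  have hnz : NoZeroDivisors F := by
    constructor
    intro x y hxy
    by_cases hx : x = 0
    · exact Or.inl hx
    · right
      apply Subtype.ext
      refine DFunLike.ext _ _ fun w => ?_
      have : x.1 (y.1 w) = 0 := by
        have := congrArg (fun z : F => z.1 w) hxy
        exact this
      exact hinj x hx _ this
  have hntF : Nontrivial F := by
    refine ⟨0, 1, ?_⟩
    intro h
    obtain ⟨v, hv⟩ := exists_ne (1 : V)
    apply hv
    have := congrArg (fun z : F => z.1 (Additive.ofMul v)) h
    exact this.symm
  have hdom : IsDomain F := NoZeroDivisors.to_isDomain F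
  have := Fintype.ofFinite F
  classical
  let _ : DivisionRing F := Fintype.divisionRingOfIsDomain F
  refine ⟨Module.finrank F (Additive V), ?_⟩
  rw [hcard]
  have h := Module.natCard_eq_pow_finrank (K := F) (V := Additive V)
  rw [← h]
  rfl

lemma exists_derivation_aux (M : Subgroup Γ) (hM : IsCoatom M) [Nontrivial V]
    (hcomm : ∀ s t : socle (Γ ⧸ M.normalCore), s * t = t * s)
    (ψ : socle (Γ ⧸ M.normalCore) →* V) (hψ : Function.Surjective ψ)
    (hψe : ∀ g s, ψ (socAct Γ (QuotientGroup.mk' M.normalCore) g s) = a g (ψ s)) :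
    ∃ d ∈ Z1 a, (∀ m ∈ M, d m = 1) ∧ ∀ v, ∃ c ∈ a.ker, d c = v := by
  set K := M.normalCore with hK
  let π := QuotientGroup.mk' K
  let S := socle (Γ ⧸ K)
  have hact : ∀ g (s : S), ((socAct Γ π g s : S) : Γ ⧸ K) = π g * s * (π g)⁻¹ := fun g s => rfl
  let T : Subgroup Γ := S.comap π
  have hTn : T.Normal := inferInstance
  have hnot : ¬ T ≤ M := by
    intro hle
    have h1 : T ≤ K := Subgroup.normal_le_normalCore.2 hle
    obtain ⟨v, hv⟩ := exists_ne (1 : V)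
    obtain ⟨s, rfl⟩ := hψ v
    apply hv
    obtain ⟨t, ht⟩ := QuotientGroup.mk'_surjective K s.1
    have htT : t ∈ T := by rw [Subgroup.mem_comap]; change π t ∈ S; rw [show π t = s.1 from ht]; exact s.2
    have : π t = 1 := (QuotientGroup.eq_one_iff t).2 (h1 htT)
    have : s = 1 := Subtype.ext (ht.symm.trans this)
    rw [this, map_one]
  have htop : M ⊔ T = ⊤ := by
    apply hM.2
    exact lt_of_le_of_ne le_sup_left fun h => hnot (by rw [h]; exact le_sup_right)
  have hKM : K ≤ M := Subgroup.normalCore_le M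
  have hDn : (T ⊓ M).Normal := by
    constructor
    rintro x ⟨hxT, hxM⟩ g
    refine ⟨hTn.conj_mem x hxT g, ?_⟩
    have hg : g ∈ M ⊔ T := by rw [htop]; trivial
    obtain ⟨m, hm, t, ht, rfl⟩ := Subgroup.mem_sup_of_normal_right.1 hg
    have h1 : t * x * t⁻¹ ∈ M := by
      have hc := congrArg Subtype.val (hcomm ⟨π t, ht⟩ ⟨π x, hxT⟩)
      have hc : π t * π x = π x * π t := hc
      have h2 : x⁻¹ * (t * x * t⁻¹) ∈ K := by
        rw [← QuotientGroup.eq_one_iff]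
        change π _ = 1
        simp only [map_mul, map_inv]
        rw [hc]; group
      have := mul_mem hxM (hKM h2)
      simpa using this
    have h3 := mul_mem (mul_mem hm h1) (inv_mem hm)
    change m * t * x * (m * t)⁻¹ ∈ M
    convert h3 using 1
    group
  have hDK : T ⊓ M ≤ K := Subgroup.normal_le_normalCore.2 inf_le_right
  have hex : ∀ g : Γ, ∃ s : S, ∃ m ∈ M, π g = s * π m := by
    intro g
    have hg : g ∈ T ⊔ M := by rw [sup_comm, htop]; trivial
    obtain ⟨t, ht, m, hm, rfl⟩ := Subgroup.mem_sup_of_normal_left.1 hg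
    exact ⟨⟨π t, ht⟩, m, hm, map_mul _ _ _⟩
  have huniq : ∀ (s t : S) (m n : Γ), m ∈ M → n ∈ M → (s : Γ ⧸ K) * π m = t * π n → s = t := by
    intro s t m n hm hn h
    have h1 : (t : Γ ⧸ K)⁻¹ * s = π (n * m⁻¹) := by
      rw [map_mul, map_inv, inv_mul_eq_iff_eq_mul, ← mul_assoc, ← h, mul_inv_cancel_right]
    have h2 : n * m⁻¹ ∈ T ⊓ M := by
      refine ⟨?_, M.mul_mem hn (M.inv_mem hm)⟩
      change π (n * m⁻¹) ∈ S
      rw [← h1]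
      exact mul_mem (inv_mem t.2) s.2
    have h3 : π (n * m⁻¹) = 1 := (QuotientGroup.eq_one_iff _).2 (hDK h2)
    rw [h3, inv_mul_eq_one] at h1
    exact Subtype.ext h1.symm
  choose σ μ hμ hσ using hex
  have hσu : ∀ (g : Γ) (s : S) (m : Γ), m ∈ M → π g = s * π m → σ g = s := by
    intro g s m hm h
    exact huniq _ _ _ _ (hμ g) hm ((hσ g).symm.trans h)
  refine ⟨fun g => ψ (σ g), ?_, ?_, ?_⟩
  · intro g h
    change ψ (σ (g * h)) = ψ (σ g) * a g (ψ (σ h))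
    rw [← hψe, ← map_mul]
    congr 1
    refine hσu _ _ (μ g * μ h) (mul_mem (hμ g) (hμ h)) ?_
    rw [hcomm, Subgroup.coe_mul, map_mul, map_mul, mul_assoc, ← mul_assoc (σ g : Γ ⧸ K), ← hσ g]
    change _ = π g * σ h * (π g)⁻¹ * _
    rw [hσ h]
    group
  · intro m hm
    change ψ (σ m) = 1
    rw [hσu m 1 m hm (by simp), map_one]
  · intro v
    obtain ⟨s, rfl⟩ := hψ v
    obtain ⟨c, hc⟩ := QuotientGroup.mk'_surjective K s.1
    have hc : π c = s.1 := hc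
    refine ⟨c, ?_, ?_⟩
    · rw [MonoidHom.mem_ker]
      ext w
      obtain ⟨t, rfl⟩ := hψ w
      rw [← hψe, MulAut.one_apply]
      congr 1
      apply Subtype.ext
      rw [hact, hc]
      have := congrArg Subtype.val (hcomm s t)
      have : (s : Γ ⧸ K) * t = t * s := this
      rw [this]; group
    · change ψ (σ c) = ψ s
      rw [hσu c s 1 (one_mem _) (by rw [hc]; simp)]

lemma gequiv_equivariant {W U : Type*} [Group W] [CommGroup U] {b : Γ →* MulAut W}
    {c : Γ →* MulAut U} (h : GEquiv Γ b c) :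
    ∃ φ : W ≃* U, ∀ g w, φ (b g w) = c g (φ w) := by
  obtain ⟨φ, Φ, h1, h2⟩ := h
  refine ⟨φ, fun g w => ?_⟩
  have e : (SemidirectProduct.inl (b g w) : W ⋊[b] Γ) * SemidirectProduct.inr g =
      SemidirectProduct.inr g * SemidirectProduct.inl w := by
    ext <;> simp
  have e2 := congrArg Φ e
  rw [map_mul, map_mul, h1, h1] at e2
  have e3 := congrArg SemidirectProduct.left e2
  simp only [SemidirectProduct.mul_left, SemidirectProduct.left_inl, SemidirectProduct.right_inl,
    map_one, MulAut.one_apply, h2, SemidirectProduct.right_inr] at e3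
  rw [mul_comm] at e3
  exact mul_left_cancel e3

lemma exists_derivation (M : Subgroup Γ) (hM : IsCoatom M) [Nontrivial V]
    (h : GEquiv Γ (socAct Γ (QuotientGroup.mk' M.normalCore)) a ∨
      GEquiv Γ (socAct Γ (QuotientGroup.mk' M.normalCore)) (prodAct Γ a)) :
    ∃ d ∈ Z1 a, (∀ m ∈ M, d m = 1) ∧ ∀ v, ∃ c ∈ a.ker, d c = v := by
  rcases h with h | h
  · obtain ⟨φ, hφ⟩ := gequiv_equivariant h
    refine exists_derivation_aux M hM (fun s t => φ.injective ?_) φ.toMonoidHom φ.surjective hφ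
    rw [map_mul, map_mul, mul_comm]
  · obtain ⟨φ, hφ⟩ := gequiv_equivariant h
    refine exists_derivation_aux M hM (fun s t => φ.injective ?_)
      ((MonoidHom.fst V V).comp φ.toMonoidHom) (fun v => ?_) fun g s => ?_
    · rw [map_mul, map_mul, mul_comm]
    · obtain ⟨s, hs⟩ := φ.surjective (v, 1)
      exact ⟨s, congrArg Prod.fst hs⟩
    · exact congrArg Prod.fst (hφ g s)

end Maximal

section MainBound

variable {Γ : Type*} [Group Γ] {V : Type*} [CommGroup V] {a : Γ →* MulAut V}

lemma mem_Bd_of_conj {d : Γ → V} (hd : d ∈ Z1 a) (g x : Γ) (h : d (x * g * x⁻¹) = 1) :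
    g ∈ Bd a d := by
  have e1 := Z1.mul hd x⁻¹ (x * g * x⁻¹)
  have e2 := Z1.mul hd g x⁻¹
  have e3 : x⁻¹ * (x * g * x⁻¹) = g * x⁻¹ := by group
  rw [h, map_one, mul_one, e3, e2] at e1
  refine ⟨(d x⁻¹)⁻¹, ?_⟩
  rw [comHom_apply, inv_inv, map_inv, mul_comm]
  exact (eq_mul_inv_of_mul_eq e1).symm

lemma two_le_endCard [Finite V] (hI : Irr a) : 2 ≤ endCard Γ a := by
  have := hI.1
  have hf : Finite (EquivEnd Γ a) := finite_equivEnd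
  have : Nontrivial (EquivEnd Γ a) := by
    refine ⟨⟨MonoidHom.id V, fun _ _ => rfl⟩, ⟨1, fun _ _ => by simp⟩, ?_⟩
    intro h
    obtain ⟨v, hv⟩ := exists_ne (1 : V)
    exact hv (DFunLike.congr_fun (congrArg Subtype.val h) v)
  exact Finite.one_lt_card

open Classical in
lemma pStar_tsum_le_aux [Finite Γ] [Finite V] (hsol : Group.IsSolvable Γ) (hI : Irr a)
    (hne : a.ker ≠ ⊤) (S : ChiefSeries Γ) (A : Set Γ) (hA : ∀ g ∈ A, ∀ c ∈ a.ker, g * c ∈ A)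
    (m : ℕ) (hm2 : 2 ≤ m) (hm : ∀ g ∈ A, m ≤ Nat.card (comHom a g).ker) (P : ℝ) (hP : 0 < P)
    (hAP : (Nat.card Γ : ℝ) ≤ P * Nat.card A) (N₀ : ℕ)
    (hN : endCard Γ a ^ deltaIso a S ≤ m ^ N₀) :
    ∑' k, pStar a k ≤ (N₀ + (m : ℝ) / (m - 1)) * P := by
  have hnt := hI.1
  have hm0 : (2 : ℝ) ≤ m := by exact_mod_cast hm2
  let T := Z1 a ⧸ (innHom a).range
  let sj : (Γ → V) → Prop := fun d => ∀ v, ∃ c ∈ a.ker, d c = v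
  let B : T → Set Γ := fun t => if sj (t.out : Z1 a) then Bd a (t.out : Z1 a) else ∅
  have hinj : Function.Injective (innHom a) := by
    rw [injective_iff_map_eq_one]
    intro v hv
    refine noFix_normal hI (X := ⊤) inferInstance (by rw [top_le_iff]; exact hne) v fun g _ => ?_
    have := congrFun (congrArg Subtype.val hv) g
    have : a g v * v⁻¹ = 1 := this
    exact mul_inv_eq_one.1 this
  have hT : Nat.card T ≤ endCard Γ a ^ deltaIso a S := by
    have h1 := (innHom a).range.card_mul_index
    have h2 : Nat.card (innHom a).range = Nat.card V :=
      (Nat.card_congr (MonoidHom.ofInjective hinj).toEquiv).symm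
    have h3 := card_Z1_le hsol hI hne S
    rw [← h1, h2] at h3
    exact Nat.le_of_mul_le_mul_left h3 Nat.card_pos
  have hrw : 1 / (1 - 1 / (m : ℝ)) = (m : ℝ) / (m - 1) := by
    have : (m : ℝ) - 1 ≠ 0 := by linarith
    field_simp
  rw [← hrw]
  refine tsum_prob_le A B (1 / m) P (by positivity) ?_ hP Nat.card_pos hAP ?_ N₀ ?_ _ ?_ ?_
  · rw [div_lt_one (by linarith)]; linarith
  · intro t
    rw [one_div_mul_eq_div, le_div_iff₀ (by linarith)]
    by_cases hs : sj (t.out : Z1 a)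
    · have := Bd_count (t.out : Z1 a).2 hs A hA m hm
      simp only [B, if_pos hs]
      exact_mod_cast this
    · simp [B, if_neg hs]
  · rw [one_div, inv_pow, mul_inv_le_iff₀ (by positivity), one_mul]
    exact_mod_cast hT.trans hN
  · intro k
    unfold pStar; positivity
  · intro k
    unfold pStar
    refine div_le_div_of_nonneg_right ?_ (by positivity)
    norm_cast
    refine Nat.card_le_card_of_injective (fun x => ⟨x.1, ?_⟩) ?_
    · obtain ⟨gs, M, hM, hS, hgs⟩ := x
      obtain ⟨d, hd, hdM, hds⟩ := exists_derivation M hM hS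
      let t : T := QuotientGroup.mk (⟨d, hd⟩ : Z1 a)
      obtain ⟨⟨_, v, rfl⟩, hv⟩ := QuotientGroup.mk_out_eq_mul (innHom a).range (⟨d, hd⟩ : Z1 a)
      have hv' : ∀ g, (t.out : Z1 a).1 g = d g * (a g v * v⁻¹) := fun g =>
        congrFun (congrArg Subtype.val hv) g
      have hsj : sj (t.out : Z1 a) := by
        intro w
        obtain ⟨c, hc, hcw⟩ := hds w
        refine ⟨c, hc, ?_⟩
        have : a c = 1 := hc
        rw [hv', this, MulAut.one_apply, mul_inv_cancel, mul_one, hcw]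
      refine ⟨t, fun i => ?_⟩
      simp only [B, if_pos hsj]
      obtain ⟨x, hx⟩ := hgs i
      have h1 := mem_Bd_of_conj hd (gs i) x (hdM _ hx)
      change (t.out : Z1 a).1 (gs i) ∈ (comHom a (gs i)).range
      rw [hv']
      exact mul_mem h1 ⟨v, rfl⟩
    · intro x y hxy
      have h2 := congrArg Subtype.val hxy
      exact Subtype.ext h2

lemma pStar_tsum_le_comm [Finite Γ] [Finite V] (hsol : Group.IsSolvable Γ) (hI : Irr a)
    (hne : a.ker ≠ ⊤) (S : ChiefSeries Γ) :
    (∑' k : ℕ, pStar a k) ≤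
      min
        (((deltaIso a S : ℝ) + (endCard Γ a : ℝ) / ((endCard Γ a : ℝ) - 1)) *
          (endCard Γ a : ℝ) ^ dimEnd Γ a)
        ((((⌈((deltaIso a S : ℝ) / (dimEnd Γ a : ℝ))⌉ : ℤ) : ℝ) +
            (endCard Γ a : ℝ) ^ dimEnd Γ a / ((endCard Γ a : ℝ) ^ dimEnd Γ a - 1)) *
          (Nat.card (Γ ⧸ a.ker) : ℝ)) := by
  have hnt := hI.1
  have hq2 := two_le_endCard hI
  have hpow := endCard_pow_dimEnd hI
  have hV2 : 2 ≤ Nat.card V := Finite.one_lt_card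
  have hpowR : (endCard Γ a : ℝ) ^ dimEnd Γ a = (Nat.card V : ℝ) := by exact_mod_cast hpow
  have hdim : 0 < dimEnd Γ a := by
    rcases Nat.eq_zero_or_pos (dimEnd Γ a) with h | h
    · rw [h, pow_zero] at hpow; omega
    · exact h
  rw [hpowR]
  apply le_min
  · refine pStar_tsum_le_aux hsol hI hne S {g | ∃ v, v ≠ 1 ∧ a g v = v} ?_ (endCard Γ a) hq2 ?_
      (Nat.card V) (by positivity) ?_ (deltaIso a S) le_rfl
    · rintro g ⟨v, hv, hgv⟩ c hc
      refine ⟨v, hv, ?_⟩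
      have : a c = 1 := hc
      rw [map_mul, this, mul_one, hgv]
    · rintro g ⟨v, hv, hgv⟩
      exact endCard_le_fix hI g v hv hgv
    · obtain ⟨v, hv⟩ := exists_ne (1 : V)
      let _ : MulAction Γ V := MulAction.compHom V a
      have h1 := MulAction.index_stabilizer Γ v
      have h2 := (MulAction.stabilizer Γ v).card_mul_index
      rw [h1] at h2
      have h3 : (MulAction.orbit Γ v).ncard ≤ Nat.card V := Set.ncard_le_card _
      have h4 : Nat.card (MulAction.stabilizer Γ v) ≤
          Nat.card ({g | ∃ v, v ≠ 1 ∧ a g v = v} : Set Γ) :=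
        Nat.card_mono (Set.toFinite _) fun g (hg : a g v = v) => ⟨v, hv, hg⟩
      have h5 := Nat.mul_le_mul h3 h4
      rw [mul_comm, h2] at h5
      exact_mod_cast h5
  · have hceil : ((⌈((deltaIso a S : ℝ) / (dimEnd Γ a : ℝ))⌉ : ℤ) : ℝ) =
        ((⌈((deltaIso a S : ℝ) / (dimEnd Γ a : ℝ))⌉₊ : ℕ) : ℝ) := by
      rw [← natCast_ceil_eq_intCast_ceil (by positivity)]
    rw [hceil]
    refine pStar_tsum_le_aux hsol hI hne S (a.ker : Set Γ) ?_ (Nat.card V) hV2 ?_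
      (Nat.card (Γ ⧸ a.ker)) (by exact_mod_cast Nat.card_pos) ?_ _ ?_
    · intro g hg c hc
      exact mul_mem hg hc
    · intro g hg
      have hg : a g = 1 := hg
      have : (comHom a g).ker = ⊤ := by
        rw [eq_top_iff]
        intro v _
        rw [MonoidHom.mem_ker, comHom_apply, hg, MulAut.one_apply, mul_inv_cancel]
      rw [this, Subgroup.card_top]
    · have := a.ker.card_eq_card_quotient_mul_card_subgroup
      exact_mod_cast this.le
    · rw [← hpow, ← pow_mul]
      refine Nat.pow_le_pow_right (by omega) ?_
      have h1 := Nat.le_ceil ((deltaIso a S : ℝ) / (dimEnd Γ a : ℝ))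
      rw [div_le_iff₀ (by exact_mod_cast hdim)] at h1
      rw [mul_comm]
      exact_mod_cast h1

end MainBound

/-- The inequality (3.6) in the proof of Theorem 2: for a non-central complemented chief
factor `V` of a finite soluble group `G`,
`Σ_{k≥0} P*_{G,V}(k) ≤ min{(δ_V + q_V/(q_V-1))·q_V^{n_V},
                            (⌈δ_V/n_V⌉ + q_V^{n_V}/(q_V^{n_V}-1))·|H_V|}`. -/
theorem pStar_tsum_le (G : Type) [Group G] [Finite G] (hsol : IsSolvable G)
    (V : Type) [Group V] (a : G →* MulAut V) (X Y : Subgroup G)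
    (hchief : IsChiefFactorPair G X Y)
    (hcomp : IsComplementedFactor G X Y) (hnc : ¬ IsCentralFactor G X Y)
    (hrep : RepresentsFactor G a X Y)
    (S : ChiefSeries G) :
    (∑' k : ℕ, pStar a k) ≤
      min
        (((deltaIso a S : ℝ) + (endCard G a : ℝ) / ((endCard G a : ℝ) - 1)) *
          (endCard G a : ℝ) ^ dimEnd G a)
        ((((⌈((deltaIso a S : ℝ) / (dimEnd G a : ℝ))⌉ : ℤ) : ℝ) +
            (endCard G a : ℝ) ^ dimEnd G a / ((endCard G a : ℝ) ^ dimEnd G a - 1)) *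
          (Nat.card (G ⧸ a.ker) : ℝ)) := by
  have hsol' : Group.IsSolvable G := hsol
  have hab := chief_abelian hsol' hchief
  obtain ⟨hX, hY, hlt, hmin⟩ := hchief
  obtain ⟨f, hf, hfY, hfe⟩ := hrep
  have hfin : Finite V := Finite.of_surjective f hf
  have hcomm : ∀ v w : V, v * w = w * v := by
    intro v w
    obtain ⟨x, rfl⟩ := hf v
    obtain ⟨y, rfl⟩ := hf w
    have h1 : f (x * y * x⁻¹ * y⁻¹) = 1 := (hfY _).2 (hab x x.2 y y.2)
    rw [map_mul, map_mul, map_mul, map_inv, map_inv, mul_inv_eq_one, mul_inv_eq_iff_eq_mul] at h1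
    exact h1
  let inst : CommGroup V := { (inferInstance : Group V) with mul_comm := hcomm }
  have hI : @Irr G _ V inst a := by
    constructor
    · obtain ⟨x, hx, hxY⟩ := Set.exists_of_ssubset hlt
      exact ⟨f ⟨x, hx⟩, 1, fun h => hxY ((hfY _).1 h)⟩
    · intro W hW
      let N : Subgroup G := (W.comap f).map X.subtype
      have hN : N.Normal := by
        constructor
        rintro _ ⟨x, hx, rfl⟩ g
        refine ⟨⟨g * x * g⁻¹, hX.conj_mem x x.2 g⟩, ?_, rfl⟩
        change f _ ∈ W
        rw [hfe g x _ rfl]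
        exact hW g _ hx
      have hYN : Y ≤ N := by
        intro y hy
        refine ⟨⟨y, hlt.le hy⟩, ?_, rfl⟩
        change f _ ∈ W
        rw [(hfY ⟨y, hlt.le hy⟩).2 hy]
        exact one_mem W
      have hNX : N ≤ X := by
        rintro _ ⟨x, -, rfl⟩
        exact x.2
      rcases hmin N hN hYN hNX with h1 | h1
      · left
        rw [eq_bot_iff]
        intro w hw
        obtain ⟨x, rfl⟩ := hf w
        have hxN : (x : G) ∈ N := ⟨x, hw, rfl⟩
        rw [h1] at hxN
        exact Subgroup.mem_bot.2 ((hfY x).2 hxN)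
      · right
        rw [eq_top_iff]
        intro w _
        obtain ⟨x, rfl⟩ := hf w
        have hxN : (x : G) ∈ N := by rw [h1]; exact x.2
        obtain ⟨z, hz, hzx⟩ := hxN
        have : z = x := Subtype.ext hzx
        rw [← this]; exact hz
  have hne : a.ker ≠ ⊤ := by
    intro h
    apply hnc
    intro g x hx
    have hg : g ∈ a.ker := by rw [h]; trivial
    have hg : a g = 1 := hg
    let x' : X := ⟨x, hx⟩
    let y' : X := ⟨g * x * g⁻¹, hX.conj_mem x hx g⟩
    have h1 : f y' = f x' := by rw [hfe g x' y' rfl, hg, MulAut.one_apply]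
    have h2 : f (y' * x'⁻¹) = 1 := by rw [map_mul, map_inv, h1, mul_inv_cancel]
    exact (hfY _).1 h2
  exact @pStar_tsum_le_comm G _ V inst a _ hfin hsol' hI hne S

end ChebotarevPaper
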